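/- arXiv:2102.07103 — 2 statements merged into one kernel-verified Lean document; each statement's English description precedes it below -/
import Mathlib

section
/- Let n ≥ 2 and let E and E_i (i ∈ ℕ) be nonempty compact subsets of ℝⁿ satisfying E_{i+1} ⊆ E_i for every i and E = ∩_{i=1}^∞ E_i. Then SE = ∩_{i=1}^∞ SE_i, where S denotes Steiner symmetrization about the hyperplane e_n^⊥. -/
open MeasureTheory Filter Metric

/-- Orthogonal projection of `ℝⁿ` onto the hyperplane `u^⊥` through the origin. -/
noncomputable def steinerProj {n : ℕ} (u : EuclideanSpace ℝ (Fin n)) :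
    EuclideanSpace ℝ (Fin n) → EuclideanSpace ℝ (Fin n) :=
  fun z => ((Submodule.orthogonalProjectionOnto (Submodule.span ℝ {u})ᗮ) z : EuclideanSpace ℝ (Fin n))

/-- `ℓ_{E,u}(x')` : the one-dimensional Lebesgue measure of `{t : x' + t u ∈ E}`. -/
noncomputable def steinerLen {n : ℕ} (u : EuclideanSpace ℝ (Fin n))
    (E : Set (EuclideanSpace ℝ (Fin n))) (x' : EuclideanSpace ℝ (Fin n)) : ℝ :=
  (volume {t : ℝ | x' + t • u ∈ E}).toReal

/-- Steiner symmetrization of `E` about the hyperplane `u^⊥`: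
`S_u E = {x' + t u : x' ∈ π_u(E), |t| ≤ ℓ_{E,u}(x')/2}`. -/
noncomputable def steiner {n : ℕ} (u : EuclideanSpace ℝ (Fin n))
    (E : Set (EuclideanSpace ℝ (Fin n))) : Set (EuclideanSpace ℝ (Fin n)) :=
  {x | ∃ x' ∈ steinerProj u '' E, ∃ t : ℝ, |t| ≤ steinerLen u E x' / 2 ∧ x = x' + t • u}

/-- The last standard basis vector `e_n` of `ℝⁿ` (junk value `0` if `n = 0`). -/
noncomputable def lastDir (n : ℕ) : EuclideanSpace ℝ (Fin n) :=
  if h : n = 0 then 0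
  else EuclideanSpace.single ⟨n - 1, Nat.sub_lt (Nat.pos_of_ne_zero h) one_pos⟩ 1

/-- `max_{x ∈ E} |x|` for a (nonempty compact) set `E ⊆ ℝⁿ`. -/
noncomputable def maxNorm {n : ℕ} (E : Set (EuclideanSpace ℝ (Fin n))) : ℝ :=
  sSup ((fun x => ‖x‖) '' E)

theorem steinerProj_add_smul {n : ℕ} (u x : EuclideanSpace ℝ (Fin n)) (t : ℝ) :
    steinerProj u (x + t • u) = steinerProj u x := by
  have h : (Submodule.orthogonalProjectionOnto (Submodule.span ℝ {u})ᗮ) u = 0 :=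
    Submodule.orthogonalProjectionOnto_orthogonalComplement_singleton_eq_zero u
  simp only [steinerProj, map_add, map_smul, h, smul_zero, add_zero]

theorem steinerProj_idem {n : ℕ} (u x : EuclideanSpace ℝ (Fin n)) :
    steinerProj u (steinerProj u x) = steinerProj u x := by
  simp only [steinerProj, Submodule.orthogonalProjectionOnto_mem_subspace_eq_self]

theorem continuous_steinerProj {n : ℕ} (u : EuclideanSpace ℝ (Fin n)) :
    Continuous (steinerProj u) := by
  unfold steinerProj
  fun_prop

theorem isCompact_steinerFiber {n : ℕ} {u : EuclideanSpace ℝ (Fin n)} (hu : u ≠ 0)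
    {E : Set (EuclideanSpace ℝ (Fin n))} (hE : IsCompact E) (x' : EuclideanSpace ℝ (Fin n)) :
    IsCompact {t : ℝ | x' + t • u ∈ E} :=
  ((Homeomorph.addLeft x').isClosedEmbedding.comp
    (isClosedEmbedding_smul_left hu)).isCompact_preimage hE

theorem steinerLen_mono {n : ℕ} {u : EuclideanSpace ℝ (Fin n)} (hu : u ≠ 0)
    {E F : Set (EuclideanSpace ℝ (Fin n))} (hF : IsCompact F) (h : E ⊆ F)
    (x' : EuclideanSpace ℝ (Fin n)) : steinerLen u E x' ≤ steinerLen u F x' :=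
  ENNReal.toReal_mono (isCompact_steinerFiber hu hF x').measure_lt_top.ne
    (measure_mono fun _ ht => h ht)

theorem steiner_mono {n : ℕ} {u : EuclideanSpace ℝ (Fin n)} (hu : u ≠ 0)
    {E F : Set (EuclideanSpace ℝ (Fin n))} (hF : IsCompact F) (h : E ⊆ F) :
    steiner u E ⊆ steiner u F := by
  rintro x ⟨x', hx', t, ht, rfl⟩
  exact ⟨x', Set.image_mono h hx', t, ht.trans (by gcongr; exact steinerLen_mono hu hF h x'), rfl⟩

/-- For `x'` in the hyperplane, the decomposition in the definition of `steiner` is unique. -/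
theorem add_smul_mem_steiner_iff {n : ℕ} {u : EuclideanSpace ℝ (Fin n)} (hu : u ≠ 0)
    {E : Set (EuclideanSpace ℝ (Fin n))} {x' : EuclideanSpace ℝ (Fin n)}
    (hx' : steinerProj u x' = x') (t : ℝ) :
    x' + t • u ∈ steiner u E ↔ x' ∈ steinerProj u '' E ∧ |t| ≤ steinerLen u E x' / 2 := by
  refine ⟨?_, fun h => ⟨x', h.1, t, h.2, rfl⟩⟩
  rintro ⟨y', ⟨z, hz, rfl⟩, s, hs, heq⟩
  have hproj := congrArg (steinerProj u) heq
  rw [steinerProj_add_smul, steinerProj_add_smul, steinerProj_idem, hx'] at hproj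
  subst hproj
  obtain rfl : t = s := smul_left_injective ℝ hu (add_left_cancel heq)
  exact ⟨⟨z, hz, rfl⟩, hs⟩

theorem tendsto_steinerLen_iInter {n : ℕ} {u : EuclideanSpace ℝ (Fin n)} (hu : u ≠ 0)
    {K : ℕ → Set (EuclideanSpace ℝ (Fin n))} (hK : ∀ i, IsCompact (K i)) (hanti : Antitone K)
    (x' : EuclideanSpace ℝ (Fin n)) :
    Tendsto (fun i => steinerLen u (K i) x') atTop (nhds (steinerLen u (⋂ i, K i) x')) := by
  have hfib : {t : ℝ | x' + t • u ∈ ⋂ i, K i} = ⋂ i, {t : ℝ | x' + t • u ∈ K i} := by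
    ext t; simp
  have hcpt i := isCompact_steinerFiber hu (hK i) x'
  unfold steinerLen
  rw [hfib]
  refine (ENNReal.tendsto_toReal ?_).comp (tendsto_measure_iInter_atTop
    (fun i => (hcpt i).measurableSet.nullMeasurableSet)
    (fun i j hij t ht => hanti hij ht) ⟨0, (hcpt 0).measure_lt_top.ne⟩)
  exact ((measure_mono (Set.iInter_subset _ 0)).trans_lt (hcpt 0).measure_lt_top).ne

theorem mem_image_iInter_of_antitone {X Y : Type*} [TopologicalSpace X] [T2Space X]
    [TopologicalSpace Y] [T1Space Y] {f : X → Y} (hf : Continuous f) {K : ℕ → Set X}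
    (hK : ∀ i, IsCompact (K i)) (hanti : Antitone K) {y : Y} (hy : ∀ i, y ∈ f '' K i) :
    y ∈ f '' ⋂ i, K i := by
  have hclosed : IsClosed (f ⁻¹' {y}) := isClosed_singleton.preimage hf
  obtain ⟨z, hz⟩ := IsCompact.nonempty_iInter_of_sequence_nonempty_isCompact_isClosed
    (fun i => K i ∩ f ⁻¹' {y})
    (fun i => Set.inter_subset_inter_left _ (hanti i.le_succ))
    (fun i => let ⟨z, hz, hzy⟩ := hy i; ⟨z, hz, hzy⟩)
    ((hK 0).inter_right hclosed) (fun i => (hK i).isClosed.inter hclosed)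
  rw [Set.mem_iInter] at hz
  exact ⟨z, Set.mem_iInter.mpr fun i => (hz i).1, (hz 0).2⟩

theorem steiner_iInter {n : ℕ} {u : EuclideanSpace ℝ (Fin n)} (hu : u ≠ 0)
    {K : ℕ → Set (EuclideanSpace ℝ (Fin n))} (hK : ∀ i, IsCompact (K i)) (hanti : Antitone K) :
    steiner u (⋂ i, K i) = ⋂ i, steiner u (K i) := by
  refine Set.Subset.antisymm
    (Set.subset_iInter fun i => steiner_mono hu (hK i) (Set.iInter_subset _ i)) ?_
  intro x hx
  rw [Set.mem_iInter] at hx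
  obtain ⟨x', ⟨z, -, rfl⟩, t, -, rfl⟩ := hx 0
  simp only [add_smul_mem_steiner_iff hu (steinerProj_idem u z)] at hx ⊢
  exact ⟨mem_image_iInter_of_antitone (continuous_steinerProj u) hK hanti fun i => (hx i).1,
    ge_of_tendsto' ((tendsto_steinerLen_iInter hu hK hanti _).div_const 2) fun i => (hx i).2⟩

theorem lastDir_ne_zero {n : ℕ} (hn : n ≠ 0) : lastDir n ≠ 0 := by
  simp [lastDir, hn]

/-- For a decreasing sequence of nonempty compact sets `E_i` with intersection `E`,
Steiner symmetrization about `e_n^⊥` satisfies `SE = ⋂ᵢ SE_i`. -/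
theorem stmt4 (n : ℕ) (hn : 2 ≤ n) (E : Set (EuclideanSpace ℝ (Fin n)))
    (Eseq : ℕ → Set (EuclideanSpace ℝ (Fin n)))
    (hE : IsCompact E) (hEne : E.Nonempty)
    (hEi : ∀ i, IsCompact (Eseq i)) (hEine : ∀ i, (Eseq i).Nonempty)
    (hdec : ∀ i, Eseq (i + 1) ⊆ Eseq i)
    (hint : E = ⋂ i, Eseq i) :
    steiner (lastDir n) E = ⋂ i, steiner (lastDir n) (Eseq i) := by
  rw [hint]
  exact steiner_iInter (lastDir_ne_zero (by omega)) hEi (antitone_nat_of_succ_le hdec)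
end

section
/- Let n ≥ 2, r > 0, let E ⊆ ℝⁿ be a compact set contained in the closed ball B̄_r of radius r centered at the origin, and let U be a relatively open subset of the sphere ∂B̄_r = {x : |x| = r} with U ∩ E = ∅. Then for every unit vector u, the Steiner symmetrization S_u E satisfies S_u E ∩ U = ∅ and S_u E ∩ σ_u(U) = ∅. -/
open MeasureTheory Filter Metric

/-- Reflection `σ_v(x) = x - 2(x·v)v` of `ℝⁿ` across the hyperplane `v^⊥`. -/
noncomputable def reflHyp {n : ℕ} (v : EuclideanSpace ℝ (Fin n))
    (x : EuclideanSpace ℝ (Fin n)) : EuclideanSpace ℝ (Fin n) :=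
  x - (2 * (inner ℝ x v : ℝ)) • v

/-- A closed set contained in `[-a, a]` whose measure is at least `2a` is all of `[-a, a]`. -/
lemma Icc_subset_of_isClosed_of_volume {A : Set ℝ} {a : ℝ} (ha : 0 < a) (hA : IsClosed A)
    (hsub : A ⊆ Set.Icc (-a) a) (hvol : 2 * a ≤ (volume A).toReal) : Set.Icc (-a) a ⊆ A := by
  have hIcc : volume (Set.Icc (-a) a) = ENNReal.ofReal (2 * a) := by
    rw [Real.volume_Icc]; ring_nf
  have hfin : volume A ≠ ⊤ :=
    ne_top_of_le_ne_top (hIcc ▸ ENNReal.ofReal_ne_top) (measure_mono hsub)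
  have hdiff : volume (Set.Icc (-a) a \ A) = 0 := by
    rw [measure_sdiff hsub hA.measurableSet.nullMeasurableSet hfin, hIcc]
    exact tsub_eq_zero_of_le ((ENNReal.ofReal_le_iff_le_toReal hfin).2 hvol)
  have hempty : Set.Ioo (-a) a \ A = ∅ :=
    ((isOpen_Ioo.sdiff hA).measure_eq_zero_iff volume).1
      (measure_mono_null (Set.sdiff_subset_sdiff_left Set.Ioo_subset_Icc_self) hdiff)
  rw [← closure_Ioo (by linarith : -a ≠ a)]
  exact closure_minimal (Set.sdiff_eq_empty.1 hempty) hA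

/-- Points of the hyperplane `u^⊥` obtained by projection are orthogonal to `u`. -/
lemma inner_steinerProj {n : ℕ} (u z : EuclideanSpace ℝ (Fin n)) :
    inner ℝ (steinerProj u z) u = 0 :=
  Submodule.mem_orthogonal_singleton_iff_inner_left.1
    (Submodule.orthogonalProjectionOnto (Submodule.span ℝ {u})ᗮ z).2

/-- A point differs from its projection onto `u^⊥` by a multiple of `u`. -/
lemma exists_steinerProj_add_smul {n : ℕ} (u z : EuclideanSpace ℝ (Fin n)) :
    ∃ s : ℝ, steinerProj u z + s • u = z := by
  have h := Submodule.sub_starProjection_mem_orthogonal (K := (Submodule.span ℝ {u})ᗮ) z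
  rw [Submodule.orthogonal_orthogonal, Submodule.mem_span_singleton] at h
  obtain ⟨s, hs⟩ := h
  refine ⟨s, ?_⟩
  rw [hs]
  exact add_sub_cancel _ _

lemma norm_sq_add_smul {n : ℕ} {u x : EuclideanSpace ℝ (Fin n)} (hu : ‖u‖ = 1)
    (hx : inner ℝ x u = 0) (t : ℝ) : ‖x + t • u‖ ^ 2 = ‖x‖ ^ 2 + t ^ 2 := by
  rw [norm_add_sq_real, inner_smul_right, hx, norm_smul, hu, Real.norm_eq_abs, mul_one, sq_abs]
  ring

/-- If `E` is a closed subset of the ball of radius `r`, then every point of its Steiner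
symmetrization on the bounding sphere already belongs to `E`. -/
lemma mem_of_mem_steiner_of_mem_sphere {n : ℕ} {r : ℝ} {E : Set (EuclideanSpace ℝ (Fin n))}
    (hE : IsClosed E) (hEsub : E ⊆ closedBall 0 r) {u x : EuclideanSpace ℝ (Fin n)}
    (hu : ‖u‖ = 1) (hx : x ∈ steiner u E) (hxr : x ∈ sphere 0 r) : x ∈ E := by
  obtain ⟨_, ⟨z, hz, rfl⟩, t, ht, rfl⟩ := hx
  have horth := inner_steinerProj u z
  obtain ⟨s, hs⟩ := exists_steinerProj_add_smul u z
  have hsub : {t : ℝ | steinerProj u z + t • u ∈ E} ⊆ Set.Icc (-|t|) |t| := by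
    intro v hv
    have hv' := mem_closedBall_zero_iff.1 (hEsub hv)
    rw [← mem_sphere_zero_iff_norm.1 hxr] at hv'
    have hsq := pow_le_pow_left₀ (norm_nonneg _) hv' 2
    rw [norm_sq_add_smul hu horth, norm_sq_add_smul hu horth] at hsq
    exact abs_le.1 (sq_le_sq.1 (by linarith))
  rcases eq_or_ne t 0 with rfl | ht0
  · have hs0 : s = 0 := by
      simpa using hsub (show steinerProj u z + s • u ∈ E from hs.symm ▸ hz)
    rw [← hs0, hs]
    exact hz
  · have hclosed : IsClosed {t : ℝ | steinerProj u z + t • u ∈ E} :=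
      hE.preimage (by fun_prop)
    exact Icc_subset_of_isClosed_of_volume (abs_pos.2 ht0) hclosed hsub
      (by unfold steinerLen at ht; linarith) (abs_le.1 le_rfl)

lemma reflHyp_reflHyp {n : ℕ} {u : EuclideanSpace ℝ (Fin n)} (hu : ‖u‖ = 1)
    (x : EuclideanSpace ℝ (Fin n)) : reflHyp u (reflHyp u x) = x := by
  have huu : inner ℝ u u = (1 : ℝ) := by rw [real_inner_self_eq_norm_sq, hu, one_pow]
  unfold reflHyp
  rw [inner_sub_left, real_inner_smul_left, huu]
  module

/-- The Steiner symmetrization about `u^⊥` is invariant under reflection across `u^⊥`. -/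
lemma reflHyp_mem_steiner {n : ℕ} {E : Set (EuclideanSpace ℝ (Fin n))}
    {u x : EuclideanSpace ℝ (Fin n)} (hu : ‖u‖ = 1) (hx : x ∈ steiner u E) :
    reflHyp u x ∈ steiner u E := by
  obtain ⟨_, ⟨z, hz, rfl⟩, t, ht, rfl⟩ := hx
  refine ⟨_, ⟨z, hz, rfl⟩, -t, by rwa [abs_neg], ?_⟩
  have huu : inner ℝ u u = (1 : ℝ) := by rw [real_inner_self_eq_norm_sq, hu, one_pow]
  unfold reflHyp
  rw [inner_add_left, real_inner_smul_left, huu, inner_steinerProj]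
  module

/-- If a compact set `E ⊆ B̄_r` misses a relatively open subset `U` of the sphere `∂B̄_r`,
then for every unit vector `u` the Steiner symmetrization `S_u E` misses both `U` and the
reflected cap `σ_u(U)`. -/
theorem stmt9 (n : ℕ) (hn : 2 ≤ n) (r : ℝ) (hr : 0 < r)
    (E : Set (EuclideanSpace ℝ (Fin n))) (hE : IsCompact E)
    (hEsub : E ⊆ closedBall (0 : EuclideanSpace ℝ (Fin n)) r)
    (U : Set (EuclideanSpace ℝ (Fin n)))
    (hUopen : ∃ V : Set (EuclideanSpace ℝ (Fin n)),
      IsOpen V ∧ U = V ∩ sphere (0 : EuclideanSpace ℝ (Fin n)) r)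
    (hUE : U ∩ E = ∅) :
    ∀ u : EuclideanSpace ℝ (Fin n), ‖u‖ = 1 →
      steiner u E ∩ U = ∅ ∧ steiner u E ∩ (reflHyp u '' U) = ∅ := by
  intro u hu
  obtain ⟨V, -, rfl⟩ := hUopen
  have hdisj : ∀ x ∈ steiner u E, x ∉ V ∩ sphere 0 r := fun x hx hxU =>
    Set.eq_empty_iff_forall_notMem.1 hUE x
      ⟨hxU, mem_of_mem_steiner_of_mem_sphere hE.isClosed hEsub hu hx hxU.2⟩
  refine ⟨Set.eq_empty_iff_forall_notMem.2 fun x hx => hdisj x hx.1 hx.2,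
    Set.eq_empty_iff_forall_notMem.2 ?_⟩
  rintro _ ⟨hy, x, hxU, rfl⟩
  exact hdisj x (reflHyp_reflHyp hu x ▸ reflHyp_mem_steiner hu hy) hxU
end
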